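/- (Key identity of Proposition 4.) Let ψ: ℝ → ℂ be integrable and square-integrable, let κ > 0, and let h_κ(u) = 1/κ for |u| ≤ κ/2 and h_κ(u) = 0 otherwise. Define K(s,t) = ∫_ℝ h_κ(u) ψ(s−u) conj(ψ(t−u)) du and 𝒫(x) = ∫_ℝ ψ(t) conj(ψ(t−x)) dt. Then ∫_ℝ ∫_ℝ |K(s,t)|² ds dt = κ^{−2} ∫_{−κ/2}^{κ/2} ∫_{−κ/2}^{κ/2} |𝒫(v−u)|² du dv. -/

import Mathlib

open MeasureTheory Complex

/-!
Expanding the square gives `|K(s,t)|² = ∫∫ conj (F (s,t) v) * F (s,t) u du dv`, where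
`F (s,t) u = h(u) ψ(s-u) conj ψ(t-u)`. After exchanging the order of integration, the integral over
`(s,t)` for fixed `(v,u)` factors into a correlation in `s` times its conjugate in `t`, that is
`conj h(v) h(u) |𝒫(v-u)|²`. The exchange is legitimate because the `L²` norm of `F · u` is
`|h(u)| ‖ψ‖₂²`, which is integrable in `u`, so that Cauchy–Schwarz in `(s,t)` dominates the triple
integral.
-/

open scoped ENNReal ComplexConjugate

variable {𝕜 : Type*} [RCLike 𝕜]

section SquaredIntegral

variable {X U : Type*} [MeasurableSpace X] [MeasurableSpace U] {μ : Measure X} {ν : Measure U}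

lemma eLpNorm_mul_prod [SFinite ν] {f : X → 𝕜} {g : U → 𝕜} {p : ℝ≥0∞} (hp : p ≠ ∞)
    (hf : AEStronglyMeasurable f μ) (hg : AEStronglyMeasurable g ν) :
    eLpNorm (fun x : X × U => f x.1 * g x.2) p (μ.prod ν) = eLpNorm f p μ * eLpNorm g p ν := by
  rcases eq_or_ne p 0 with rfl | hp0
  · simp
  · simp only [eLpNorm_eq_lintegral_rpow_enorm_toReal hp0 hp, enorm_mul,
      ENNReal.mul_rpow_of_nonneg _ _ ENNReal.toReal_nonneg]
    rw [lintegral_prod_mul (hf.enorm.pow_const _) (hg.enorm.pow_const _),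
      ENNReal.mul_rpow_of_nonneg _ _ (by positivity)]

lemma lintegral_enorm_conj_mul_le {f g : X → 𝕜} (hf : AEStronglyMeasurable f μ)
    (hg : AEStronglyMeasurable g μ) :
    ∫⁻ x, ‖conj (f x) * g x‖ₑ ∂μ ≤ eLpNorm f 2 μ * eLpNorm g 2 μ := by
  have holder := eLpNorm_smul_le_mul_eLpNorm (r := 1) (p := 2) (q := 2) hg hf.star
  rwa [eLpNorm_star, eLpNorm_one_eq_lintegral_enorm] at holder

lemma integrable_conj_mul_of_lintegral_eLpNorm [SFinite μ] [SFinite ν] {f : X → U → 𝕜}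
    (hf : AEStronglyMeasurable (Function.uncurry f) (μ.prod ν))
    (hfin : ∫⁻ u, eLpNorm (f · u) 2 μ ∂ν ≠ ∞) :
    Integrable (fun p : X × U × U => conj (f p.1 p.2.1) * f p.1 p.2.2) (μ.prod (ν.prod ν)) := by
  have hmeas : AEStronglyMeasurable
      (fun p : X × U × U => conj (f p.1 p.2.1) * f p.1 p.2.2) (μ.prod (ν.prod ν)) :=
    (hf.comp_quasiMeasurePreserving (QuasiMeasurePreserving.prodMap
      (.id μ) Measure.quasiMeasurePreserving_fst)).star.mul
    (hf.comp_quasiMeasurePreserving (QuasiMeasurePreserving.prodMap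
      (.id μ) Measure.quasiMeasurePreserving_snd))
  have hslice : ∀ᵐ u ∂ν, AEStronglyMeasurable (f · u) μ := hf.prod_swap.prodMk_left
  have hnorm : AEMeasurable (fun u => eLpNorm (f · u) 2 μ) ν := by
    simp only [eLpNorm_eq_lintegral_rpow_enorm_toReal two_ne_zero ENNReal.ofNat_ne_top]
    exact (hf.prod_swap.enorm.pow_const _).lintegral_prod_right'.pow_const _
  refine ⟨hmeas, lt_of_le_of_lt ?_ (ENNReal.mul_lt_top hfin.lt_top hfin.lt_top)⟩
  calc ∫⁻ p, ‖conj (f p.1 p.2.1) * f p.1 p.2.2‖ₑ ∂μ.prod (ν.prod ν)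
      = ∫⁻ q : U × U, ∫⁻ x, ‖conj (f x q.1) * f x q.2‖ₑ ∂μ ∂ν.prod ν :=
        lintegral_prod_symm _ hmeas.enorm
    _ ≤ ∫⁻ q : U × U, eLpNorm (f · q.1) 2 μ * eLpNorm (f · q.2) 2 μ ∂ν.prod ν := by
        refine lintegral_mono_ae ?_
        filter_upwards [Measure.quasiMeasurePreserving_fst.ae hslice,
          Measure.quasiMeasurePreserving_snd.ae hslice] with q hv hu
        exact lintegral_enorm_conj_mul_le hv hu
    _ = (∫⁻ u, eLpNorm (f · u) 2 μ ∂ν) * ∫⁻ u, eLpNorm (f · u) 2 μ ∂ν :=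
        lintegral_prod_mul hnorm hnorm

lemma integral_prod_conj_mul_self [SFinite ν] (g : U → 𝕜) :
    ∫ q : U × U, conj (g q.1) * g q.2 ∂ν.prod ν = ((‖∫ u, g u ∂ν‖ ^ 2 : ℝ) : 𝕜) := by
  rw [integral_prod_mul (fun v => conj (g v)) g, integral_conj, RCLike.conj_mul,
    RCLike.ofReal_pow]

lemma integrable_norm_sq_integral [SFinite ν] {f : X → U → 𝕜}
    (hf : Integrable (fun p : X × U × U => conj (f p.1 p.2.1) * f p.1 p.2.2) (μ.prod (ν.prod ν))) :
    Integrable (fun x => ‖∫ u, f x u ∂ν‖ ^ 2) μ := by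
  simpa only [integral_prod_conj_mul_self, RCLike.ofReal_re] using hf.integral_prod_left.re

lemma ofReal_integral_norm_sq_integral [SFinite μ] [SFinite ν] {f : X → U → 𝕜}
    (hf : Integrable (fun p : X × U × U => conj (f p.1 p.2.1) * f p.1 p.2.2) (μ.prod (ν.prod ν))) :
    ((∫ x, ‖∫ u, f x u ∂ν‖ ^ 2 ∂μ : ℝ) : 𝕜) =
      ∫ v, ∫ u, ∫ x, conj (f x v) * f x u ∂μ ∂ν ∂ν := by
  calc ((∫ x, ‖∫ u, f x u ∂ν‖ ^ 2 ∂μ : ℝ) : 𝕜)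
      = ∫ x, ∫ q : U × U, conj (f x q.1) * f x q.2 ∂ν.prod ν ∂μ := by
        simp only [integral_prod_conj_mul_self, integral_ofReal]
    _ = ∫ q : U × U, ∫ x, conj (f x q.1) * f x q.2 ∂μ ∂ν.prod ν := integral_integral_swap hf
    _ = ∫ v, ∫ u, ∫ x, conj (f x v) * f x u ∂μ ∂ν ∂ν := integral_prod _ hf.integral_prod_right

end SquaredIntegral

section SmoothedKernel

variable {G : Type*} [AddGroup G]

/-- The integrand `h(u) ψ(s-u) conj ψ(t-u)` of the smoothed kernel, with `x = (s, t)`. -/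
def smoothingIntegrand (h ψ : G → 𝕜) (x : G × G) (u : G) : 𝕜 :=
  h u * ψ (x.1 - u) * conj (ψ (x.2 - u))

variable [MeasurableSpace G]

/-- The kernel `K(s,t)` of the wavelet `ψ` smoothed by `h`, with integration against `μ`. -/
noncomputable def smoothedKernel (μ : Measure G) (h ψ : G → 𝕜) (s t : G) : 𝕜 :=
  ∫ u, smoothingIntegrand h ψ (s, t) u ∂μ

/-- The autocorrelation `𝒫(x) = ∫ ψ(t) conj ψ(t-x) dμ(t)` of `ψ`. -/
noncomputable def autocorrelation (μ : Measure G) (ψ : G → 𝕜) (x : G) : 𝕜 :=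
  ∫ t, ψ t * conj (ψ (t - x)) ∂μ

variable {μ : Measure G} [μ.IsAddRightInvariant] {h ψ : G → 𝕜}

lemma integral_sub_mul_conj_sub [MeasurableAdd G] (ψ : G → 𝕜) (u v : G) :
    ∫ s, ψ (s - u) * conj (ψ (s - v)) ∂μ = autocorrelation μ ψ (v - u) := by
  rw [autocorrelation,
    ← integral_sub_right_eq_self (fun t => ψ t * conj (ψ (t - (v - u)))) u]
  simp only [sub_sub_sub_cancel_right]

lemma integral_conj_smoothingIntegrand_mul [MeasurableAdd G] [SFinite μ] (h ψ : G → 𝕜)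
    (u v : G) :
    ∫ x, conj (smoothingIntegrand h ψ x v) * smoothingIntegrand h ψ x u ∂μ.prod μ =
      conj (h v) * h u * ((‖autocorrelation μ ψ (v - u)‖ ^ 2 : ℝ) : 𝕜) := by
  have hfactor (x : G × G) :
      conj (smoothingIntegrand h ψ x v) * smoothingIntegrand h ψ x u = conj (h v) * h u *
        ((ψ (x.1 - u) * conj (ψ (x.1 - v))) * conj (ψ (x.2 - u) * conj (ψ (x.2 - v)))) := by
    simp only [smoothingIntegrand, map_mul, RCLike.conj_conj]
    ring
  simp only [hfactor]
  rw [integral_const_mul, integral_prod_mul (fun s => ψ (s - u) * conj (ψ (s - v)))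
    (fun t => conj (ψ (t - u) * conj (ψ (t - v)))), integral_conj, integral_sub_mul_conj_sub,
    RCLike.mul_conj, RCLike.ofReal_pow]

lemma eLpNorm_smoothingIntegrand [MeasurableAdd G] [SFinite μ] (hψ : AEStronglyMeasurable ψ μ)
    (u : G) {p : ℝ≥0∞} (hp : p ≠ ∞) :
    eLpNorm (smoothingIntegrand h ψ · u) p (μ.prod μ) =
      ‖h u‖ₑ * (eLpNorm ψ p μ * eLpNorm ψ p μ) := by
  have htranslate := measurePreserving_sub_right μ u
  have hψu : AEStronglyMeasurable (fun s => ψ (s - u)) μ := hψ.comp_measurePreserving htranslate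
  have hψu_conj : AEStronglyMeasurable (fun t => conj (ψ (t - u))) μ := hψu.star
  have hnorm : eLpNorm (fun s => ψ (s - u)) p μ = eLpNorm ψ p μ :=
    eLpNorm_comp_measurePreserving hψ htranslate
  have hnorm_conj : eLpNorm (fun t => conj (ψ (t - u))) p μ = eLpNorm ψ p μ :=
    eLpNorm_star.trans hnorm
  calc eLpNorm (smoothingIntegrand h ψ · u) p (μ.prod μ)
      = eLpNorm (h u • fun x : G × G => ψ (x.1 - u) * conj (ψ (x.2 - u))) p (μ.prod μ) := by
        simp only [smoothingIntegrand, mul_assoc]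
        rfl
    _ = ‖h u‖ₑ * (eLpNorm ψ p μ * eLpNorm ψ p μ) := by
        rw [eLpNorm_const_smul, eLpNorm_mul_prod hp hψu hψu_conj, hnorm, hnorm_conj]

variable [MeasurableAdd₂ G] [MeasurableNeg G]

lemma aestronglyMeasurable_smoothingIntegrand [SFinite μ] (hh : AEStronglyMeasurable h μ)
    (hψ : AEStronglyMeasurable ψ μ) :
    AEStronglyMeasurable (Function.uncurry (smoothingIntegrand h ψ)) ((μ.prod μ).prod μ) := by
  have hsub := quasiMeasurePreserving_sub_of_right_invariant μ μ
  have hfst : AEStronglyMeasurable (fun p : (G × G) × G => ψ (p.1.1 - p.2)) ((μ.prod μ).prod μ) :=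
    hψ.comp_quasiMeasurePreserving (hsub.comp
      (QuasiMeasurePreserving.prodMap Measure.quasiMeasurePreserving_fst (.id μ)))
  have hsnd : AEStronglyMeasurable (fun p : (G × G) × G => ψ (p.1.2 - p.2)) ((μ.prod μ).prod μ) :=
    hψ.comp_quasiMeasurePreserving (hsub.comp
      (QuasiMeasurePreserving.prodMap Measure.quasiMeasurePreserving_snd (.id μ)))
  exact (hh.comp_snd.mul hfst).mul hsnd.star

lemma integrable_conj_smoothingIntegrand_mul [SFinite μ] (hh : Integrable h μ)
    (hψ : MemLp ψ 2 μ) :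
    Integrable (fun p : (G × G) × G × G =>
        conj (smoothingIntegrand h ψ p.1 p.2.1) * smoothingIntegrand h ψ p.1 p.2.2)
      ((μ.prod μ).prod (μ.prod μ)) := by
  refine integrable_conj_mul_of_lintegral_eLpNorm
    (aestronglyMeasurable_smoothingIntegrand hh.1 hψ.1) ?_
  have hfin : eLpNorm ψ 2 μ * eLpNorm ψ 2 μ ≠ ∞ := ENNReal.mul_ne_top hψ.2.ne hψ.2.ne
  simp only [eLpNorm_smoothingIntegrand hψ.1 _ ENNReal.ofNat_ne_top]
  rw [lintegral_mul_const' _ _ hfin]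
  exact ENNReal.mul_ne_top hh.2.ne hfin

theorem ofReal_integral_norm_sq_smoothedKernel [SFinite μ] (hh : Integrable h μ)
    (hψ : MemLp ψ 2 μ) :
    ((∫ s, ∫ t, ‖smoothedKernel μ h ψ s t‖ ^ 2 ∂μ ∂μ : ℝ) : 𝕜) =
      ∫ v, ∫ u, conj (h v) * h u * ((‖autocorrelation μ ψ (v - u)‖ ^ 2 : ℝ) : 𝕜) ∂μ ∂μ := by
  have hint := integrable_conj_smoothingIntegrand_mul hh hψ
  simp only [smoothedKernel]
  rw [← integral_prod _ (integrable_norm_sq_integral hint), ofReal_integral_norm_sq_integral hint]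
  simp only [integral_conj_smoothingIntegrand_mul]

theorem integral_norm_sq_smoothedKernel_ofReal [SFinite μ] {h : G → ℝ} (hh : Integrable h μ)
    (hψ : MemLp ψ 2 μ) :
    ∫ s, ∫ t, ‖smoothedKernel μ (fun u => (h u : 𝕜)) ψ s t‖ ^ 2 ∂μ ∂μ =
      ∫ v, h v * ∫ u, h u * ‖autocorrelation μ ψ (v - u)‖ ^ 2 ∂μ ∂μ := by
  have hcomplex := ofReal_integral_norm_sq_smoothedKernel hh.ofReal hψ
  simp only [RCLike.conj_ofReal, ← RCLike.ofReal_mul, integral_ofReal, RCLike.ofReal_inj]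
    at hcomplex
  simpa only [mul_assoc, integral_const_mul] using hcomplex

end SmoothedKernel

section RectWindow

variable {κ : ℝ}

/-- The rectangular smoothing window `h_κ` of width `κ > 0` and total mass one. -/
noncomputable def rectWindow (κ u : ℝ) : ℝ := if |u| ≤ κ / 2 then κ⁻¹ else 0

lemma rectWindow_eq_indicator (κ : ℝ) :
    rectWindow κ = (Set.Icc (-(κ / 2)) (κ / 2)).indicator fun _ => κ⁻¹ := by
  ext u
  simp only [rectWindow, Set.indicator_apply, Set.mem_Icc, abs_le]

lemma integrable_rectWindow (κ : ℝ) : Integrable (rectWindow κ) := by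
  rw [rectWindow_eq_indicator, integrable_indicator_iff measurableSet_Icc]
  exact integrableOn_const measure_Icc_lt_top.ne

lemma integral_rectWindow_mul (hκ : 0 ≤ κ) (f : ℝ → ℝ) :
    ∫ u, rectWindow κ u * f u = κ⁻¹ * ∫ u in (-(κ / 2))..(κ / 2), f u := by
  simp only [rectWindow_eq_indicator, ← Set.indicator_mul_left]
  rw [integral_indicator measurableSet_Icc, integral_const_mul, integral_Icc_eq_integral_Ioc,
    intervalIntegral.integral_of_le (by linarith)]

end RectWindow

theorem stmt_10_general {ψ : ℝ → 𝕜} {κ : ℝ} (hκ : 0 < κ) (hψ : MemLp ψ 2) :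
    ∫ s, ∫ t, ‖smoothedKernel volume (fun u => (rectWindow κ u : 𝕜)) ψ s t‖ ^ 2 =
      (κ ^ 2)⁻¹ * ∫ v in (-(κ / 2))..(κ / 2), ∫ u in (-(κ / 2))..(κ / 2),
        ‖autocorrelation volume ψ (v - u)‖ ^ 2 := by
  rw [integral_norm_sq_smoothedKernel_ofReal (integrable_rectWindow κ) hψ]
  simp only [integral_rectWindow_mul hκ.le, intervalIntegral.integral_const_mul]
  ring

theorem stmt_10 (ψ : ℝ → ℂ) (κ : ℝ) (hκ : 0 < κ)
    (hψ1 : Integrable ψ) (hψ2 : Integrable (fun t => ‖ψ t‖ ^ 2))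
    (hκfun : ℝ → ℝ) (hhκ : ∀ u, hκfun u = if |u| ≤ κ / 2 then κ⁻¹ else 0)
    (K : ℝ → ℝ → ℂ)
    (hK : ∀ s t, K s t = ∫ u, (hκfun u : ℂ) * ψ (s - u) * starRingEnd ℂ (ψ (t - u)))
    (P : ℝ → ℂ)
    (hP : ∀ x, P x = ∫ t, ψ t * starRingEnd ℂ (ψ (t - x))) :
    ∫ s, ∫ t, ‖K s t‖ ^ 2 =
      (κ ^ 2)⁻¹ * ∫ v in (-(κ / 2))..(κ / 2), ∫ u in (-(κ / 2))..(κ / 2), ‖P (v - u)‖ ^ 2 := by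
  obtain rfl : hκfun = rectWindow κ := funext hhκ
  obtain ⟨rfl, rfl⟩ := And.intro (funext₂ hK) (funext hP)
  exact stmt_10_general hκ ((memLp_two_iff_integrable_sq_norm hψ1.1).2 hψ2)
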